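/- arXiv:2408.16960 — 3 statements merged into one kernel-verified Lean document; each statement's English description precedes it below -/
import Mathlib

section
/- Let p be a prime, a ≥ 0 and n' ≥ 1 with p ∤ n', and set n = pᵃ · n'. Let q be a power of p and let q₀ be a natural number with q₀ ≡ −q (mod n'). Let ι : ZMod n' → ZMod n be the additive embedding obtained from the Chinese remainder theorem isomorphism ZMod n ≅ ZMod n' × ZMod pᵃ, sending x to the element corresponding to (x, 0). Then for every x ∈ ZMod n' satisfying (q + 1) · x = 0 (equivalently, (−q) · x = x), the image ι(x) satisfies q₀ · ι(x) = ι(x). In particular, ι restricts to an injection from the fixed points of multiplication by −q on ZMod n' into the fixed points of multiplication by q₀ on ZMod n. -/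
/-- The additive embedding `ZMod n' → ZMod (p^a * n')` obtained from the Chinese remainder
theorem isomorphism `ZMod (p^a * n') ≃+* ZMod (p^a) × ZMod n'`, sending `x` to the element
corresponding to `(0, x)` (i.e. to `x` in the `ZMod n'` factor and `0` in the `ZMod p^a`
factor). -/
noncomputable def crtEmbed (p a n' : ℕ) (hcop : Nat.Coprime (p ^ a) n') :
    ZMod n' → ZMod (p ^ a * n') :=
  fun x => (ZMod.chineseRemainder hcop).symm (0, x)

section

variable {p a n' : ℕ} (hcop : Nat.Coprime (p ^ a) n')

theorem crtEmbed_injective : Function.Injective (crtEmbed p a n' hcop) :=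
  (ZMod.chineseRemainder hcop).symm.injective.comp (Prod.mk_right_injective 0)

theorem mul_crtEmbed (c : ZMod (p ^ a * n')) (x : ZMod n') :
    c * crtEmbed p a n' hcop x =
      crtEmbed p a n' hcop (ZMod.castHom (dvd_mul_left n' (p ^ a)) (ZMod n') c * x) := by
  obtain ⟨m, rfl⟩ := ZMod.intCast_surjective c
  apply (ZMod.chineseRemainder hcop).injective
  simp only [crtEmbed, map_mul, map_intCast, RingEquiv.apply_symm_apply]
  ext <;> simp

theorem mul_crtEmbed_eq_self_iff (c : ZMod (p ^ a * n')) (x : ZMod n') :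
    c * crtEmbed p a n' hcop x = crtEmbed p a n' hcop x ↔
      ZMod.castHom (dvd_mul_left n' (p ^ a)) (ZMod n') c * x = x := by
  rw [mul_crtEmbed, (crtEmbed_injective hcop).eq_iff]

end

theorem neg_mul_eq_self_iff {R : Type*} [NonAssocRing R] (q x : R) :
    -q * x = x ↔ (q + 1) * x = 0 := by
  rw [add_one_mul, add_eq_zero_iff_neg_eq, neg_mul]

theorem crtEmbed_fixed_points_general (p a n' : ℕ) (hcop : Nat.Coprime (p ^ a) n')
    (q : ZMod n') (q₀ : ZMod (p ^ a * n'))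
    (hq₀ : ZMod.castHom (dvd_mul_left n' (p ^ a)) (ZMod n') q₀ = -q) :
    (∀ x : ZMod n', q₀ * crtEmbed p a n' hcop x = crtEmbed p a n' hcop x ↔ (q + 1) * x = 0) ∧
    Function.Injective (crtEmbed p a n' hcop) := by
  refine ⟨fun x ↦ ?_, crtEmbed_injective hcop⟩
  rw [mul_crtEmbed_eq_self_iff, hq₀, neg_mul_eq_self_iff]

/-- Lemma 2.15: if `q₀ ≡ -q (mod n')`, then every fixed point of multiplication by `-q` on
`ZMod n'` maps under the CRT embedding to a fixed point of multiplication by `q₀` on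
`ZMod (p^a * n')`; moreover this restriction is injective. -/
theorem crtEmbed_fixed_points (p : ℕ) (hp : p.Prime) (a n' : ℕ) (hn' : 0 < n')
    (hpn' : ¬ p ∣ n') (hcop : Nat.Coprime (p ^ a) n')
    (q k : ℕ) (hq : q = p ^ k) (q₀ : ℕ) (hq₀ : (q₀ : ZMod n') = -(q : ZMod n')) :
    (∀ x : ZMod n', ((q : ZMod n') + 1) * x = 0 →
      (q₀ : ZMod (p ^ a * n')) * crtEmbed p a n' hcop x = crtEmbed p a n' hcop x) ∧
    Set.InjOn (crtEmbed p a n' hcop) {x : ZMod n' | ((q : ZMod n') + 1) * x = 0} := by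
  obtain ⟨fixed_iff, inj⟩ :=
    crtEmbed_fixed_points_general p a n' hcop q q₀ ((map_natCast _ q₀).trans hq₀)
  exact ⟨fun x ↦ (fixed_iff x).mpr, inj.injOn⟩
end

section
/- Let K be a field, ι a finite index type, and b : ι → β a function into a linearly ordered type β (the block labels). Call a matrix P : Matrix ι ι K block-unipotent (with respect to b) if P i j = 0 whenever b j < b i, and whenever b i = b j one has P i j = 1 if i = j and P i j = 0 otherwise; call a matrix Λ block-diagonal if Λ i j = 0 whenever b i ≠ b j. Suppose P and P' are block-unipotent matrices and Λ and Λ' are invertible block-diagonal matrices such that Pᵀ · Λ · P = P'ᵀ · Λ' · P'. Then P = P' and Λ = Λ'. -/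
/-- A matrix is block-unipotent with respect to a block labelling `b : ι → β`:
block-wise upper triangular (entries vanish when the column label is strictly smaller
than the row label) and the diagonal blocks are identity matrices. -/
def IsBlockUnipotent {K ι β : Type*} [Zero K] [One K] [DecidableEq ι] [LT β]
    (b : ι → β) (P : Matrix ι ι K) : Prop :=
  (∀ i j, b j < b i → P i j = 0) ∧
  (∀ i j, b i = b j → P i j = if i = j then 1 else 0)

/-- A matrix is block-diagonal with respect to a block labelling `b : ι → β`:
entries vanish whenever the row and column labels differ. -/
def IsBlockDiagonalWrt {K ι β : Type*} [Zero K] (b : ι → β) (Λ : Matrix ι ι K) : Prop :=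
  ∀ i j, b i ≠ b j → Λ i j = 0

/-!
A block-unipotent matrix is `1 - N` with `N` strictly block triangular, hence nilpotent, so its
inverse `∑ N ^ k` is again block-unipotent. Given `L Λ U = L' Λ' U'` with `L`, `L'` lower and
`U`, `U'` upper block-unipotent, put `M = L'⁻¹ L` and `Q = U' U⁻¹`, so that `M Λ = Λ' Q`, that is,
`Λ + (M - 1) Λ = Λ' + Λ' (Q - 1)`. A matrix splits in only one way into a strictly lower, a block
diagonal and a strictly upper part, so `Λ = Λ'` and `(M - 1) Λ = 0 = Λ' (Q - 1)`; cancelling `Λ`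
gives `M = Q = 1`. Lusztig's equation is the case `L = ᵗP`, `U = P`.
-/

open OrderDual

/-- A block-wise strictly upper triangular matrix: entries on and below the diagonal blocks vanish.
Strictly *lower* triangularity is expressed by the labelling `toDual ∘ b`. -/
def IsStrictBlockTriangular {R ι β : Type*} [Zero R] [LE β] (b : ι → β) (N : Matrix ι ι R) : Prop :=
  ∀ ⦃i j⦄, b j ≤ b i → N i j = 0

namespace IsStrictBlockTriangular

theorem blockTriangular {R ι β : Type*} [Zero R] [Preorder β] {b : ι → β} {N : Matrix ι ι R}
    (hN : IsStrictBlockTriangular b N) : N.BlockTriangular b :=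
  fun _ _ hij => hN hij.le

theorem add {R ι β : Type*} [AddZeroClass R] [LE β] {b : ι → β} {M N : Matrix ι ι R}
    (hM : IsStrictBlockTriangular b M) (hN : IsStrictBlockTriangular b N) :
    IsStrictBlockTriangular b (M + N) := fun i j hij => by
  rw [Matrix.add_apply, hM hij, hN hij, add_zero]

theorem neg {R ι β : Type*} [NegZeroClass R] [LE β] {b : ι → β} {N : Matrix ι ι R}
    (hN : IsStrictBlockTriangular b N) : IsStrictBlockTriangular b (-N) := fun i j hij => by
  rw [Matrix.neg_apply, hN hij, neg_zero]

section Mul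

variable {R ι β : Type*} [NonUnitalNonAssocSemiring R] [Fintype ι] [LinearOrder β] {b : ι → β}
  {A N : Matrix ι ι R}

theorem mul_blockTriangular (hN : IsStrictBlockTriangular b N) (hA : A.BlockTriangular b) :
    IsStrictBlockTriangular b (N * A) := fun i j hij => by
  rw [Matrix.mul_apply]
  refine Finset.sum_eq_zero fun k _ => ?_
  rcases le_or_gt (b k) (b i) with hki | hik
  · rw [hN hki, zero_mul]
  · rw [hA (hij.trans_lt hik), mul_zero]

theorem blockTriangular_mul (hA : A.BlockTriangular b) (hN : IsStrictBlockTriangular b N) :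
    IsStrictBlockTriangular b (A * N) := fun i j hij => by
  rw [Matrix.mul_apply]
  refine Finset.sum_eq_zero fun k _ => ?_
  rcases lt_or_ge (b k) (b i) with hki | hik
  · rw [hA hki, zero_mul]
  · rw [hN (hij.trans hik), mul_zero]

end Mul

section Nilpotent

variable {R ι β : Type*} [Semiring R] [Fintype ι] [DecidableEq ι] [LinearOrder β] {b : ι → β}
  {N : Matrix ι ι R}

theorem add_le_of_pow_apply_ne_zero (hN : IsStrictBlockTriangular b N) {height : ι → ℕ}
    (h_mono : ∀ ⦃i j⦄, b i < b j → height i < height j) {k : ℕ} {i j : ι} (hij : (N ^ k) i j ≠ 0) :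
    height i + k ≤ height j := by
  induction k generalizing j with
  | zero =>
    have : i = j := by
      by_contra hne
      exact hij (by rw [pow_zero, Matrix.one_apply_ne hne])
    exact this ▸ le_rfl
  | succ k ih =>
    rw [pow_succ, Matrix.mul_apply] at hij
    obtain ⟨l, -, hl⟩ := Finset.exists_ne_zero_of_sum_ne_zero hij
    have hil : height i + k ≤ height l := ih (left_ne_zero_of_mul hl)
    have hlj : height l < height j := h_mono (not_le.mp fun hle => right_ne_zero_of_mul hl (hN hle))
    lia

theorem pow_card_eq_zero (hN : IsStrictBlockTriangular b N) : N ^ Fintype.card ι = 0 := by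
  let height (i : ι) : ℕ := Finset.card {x | b x < b i}
  have h_mono : ∀ ⦃i j⦄, b i < b j → height i < height j := fun i j hij => by
    refine Finset.card_lt_card (Finset.ssubset_iff_of_subset ?_ |>.mpr ⟨i, by simpa, by simp⟩)
    exact Finset.monotone_filter_right _ fun x _ hx => hx.trans hij
  ext i j
  by_contra hij
  have hle : height i + Fintype.card ι ≤ height j :=
    hN.add_le_of_pow_apply_ne_zero h_mono hij
  have hlt : height j < Fintype.card ι := Finset.card_lt_univ_of_notMem (x := j) (by simp)
  lia

end Nilpotent

end IsStrictBlockTriangular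

theorem isBlockUnipotent_iff_sub_one {R ι β : Type*} [AddGroupWithOne R] [DecidableEq ι]
    [PartialOrder β] {b : ι → β} {P : Matrix ι ι R} :
    IsBlockUnipotent b P ↔ IsStrictBlockTriangular b (P - 1) := by
  simp only [IsBlockUnipotent, IsStrictBlockTriangular, Matrix.sub_apply, sub_eq_zero,
    ← Matrix.one_apply]
  refine ⟨fun hP i j hij => ?_, fun hP => ⟨fun i j hij => ?_, fun i j hij => hP hij.ge⟩⟩
  · rcases hij.lt_or_eq with hlt | heq
    · rw [hP.1 i j hlt, Matrix.blockTriangular_one hlt]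
    · exact hP.2 i j heq.symm
  · rw [hP hij.le, Matrix.blockTriangular_one hij]

namespace IsBlockUnipotent

theorem blockTriangular {R ι β : Type*} [Zero R] [One R] [DecidableEq ι] [LT β] {b : ι → β}
    {P : Matrix ι ι R} (hP : IsBlockUnipotent b P) : P.BlockTriangular b :=
  fun i j => hP.1 i j

theorem transpose {R ι β : Type*} [Zero R] [One R] [DecidableEq ι] [LT β] {b : ι → β}
    {P : Matrix ι ι R} (hP : IsBlockUnipotent b P) : IsBlockUnipotent (toDual ∘ b) P.transpose :=
  ⟨fun i j hij => hP.1 j i hij, fun i j hij => by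
    rw [Matrix.transpose_apply, hP.2 j i (toDual.injective hij).symm]
    simp only [eq_comm]⟩

variable {R ι β : Type*} [Ring R] [Fintype ι] [DecidableEq ι] [LinearOrder β] {b : ι → β}
  {P Q : Matrix ι ι R}

theorem mul (hP : IsBlockUnipotent b P) (hQ : IsBlockUnipotent b Q) :
    IsBlockUnipotent b (P * Q) := by
  have hPQ : P * Q - 1 = (P - 1) * Q + (Q - 1) := by noncomm_ring
  rw [isBlockUnipotent_iff_sub_one, hPQ]
  exact ((isBlockUnipotent_iff_sub_one.mp hP).mul_blockTriangular hQ.blockTriangular).add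
    (isBlockUnipotent_iff_sub_one.mp hQ)

theorem exists_inverse (hP : IsBlockUnipotent b P) :
    ∃ Q, IsBlockUnipotent b Q ∧ P * Q = 1 ∧ Q * P = 1 := by
  let N := 1 - P
  have hN : IsStrictBlockTriangular b N := by
    simpa only [neg_sub] using (isBlockUnipotent_iff_sub_one.mp hP).neg
  have hPN : P = 1 - N := (sub_sub_cancel 1 P).symm
  let Q := ∑ k ∈ Finset.range (Fintype.card ι), N ^ k
  have hQ : Q.BlockTriangular b :=
    sum_mem (S := Matrix.blockTriangularSubsemiring R b) fun k _ => hN.blockTriangular.pow k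
  have hPQ : P * Q = 1 := by rw [hPN, mul_neg_geom_sum, hN.pow_card_eq_zero, sub_zero]
  have hQP : Q * P = 1 := by rw [hPN, geom_sum_mul_neg, hN.pow_card_eq_zero, sub_zero]
  have hQN : Q - 1 = Q * N := by rw [mul_sub, mul_one, hQP]
  refine ⟨Q, isBlockUnipotent_iff_sub_one.mpr ?_, hPQ, hQP⟩
  exact hQN ▸ hN.blockTriangular_mul hQ

end IsBlockUnipotent

namespace IsBlockDiagonalWrt

theorem blockTriangular {R ι β : Type*} [Zero R] [Preorder β] {b : ι → β} {Λ : Matrix ι ι R}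
    (hΛ : IsBlockDiagonalWrt b Λ) : Λ.BlockTriangular b :=
  fun i j hij => hΛ i j hij.ne'

theorem comp_toDual {R ι β : Type*} [Zero R] {b : ι → β} {Λ : Matrix ι ι R}
    (hΛ : IsBlockDiagonalWrt b Λ) : IsBlockDiagonalWrt (toDual ∘ b) Λ :=
  fun i j hij => hΛ i j (ne_of_apply_ne toDual hij)

theorem eq_and_eq_zero_of_add_eq_add {R ι β : Type*} [AddGroup R] [LinearOrder β] {b : ι → β}
    {Λ Λ' S T : Matrix ι ι R} (hΛ : IsBlockDiagonalWrt b Λ) (hΛ' : IsBlockDiagonalWrt b Λ')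
    (hS : IsStrictBlockTriangular (toDual ∘ b) S) (hT : IsStrictBlockTriangular b T)
    (heq : Λ + S = Λ' + T) : Λ = Λ' ∧ S = 0 ∧ T = 0 := by
  have entry (i j : ι) : Λ i j + S i j = Λ' i j + T i j := congr_fun₂ heq i j
  have hΛΛ' : Λ = Λ' := by
    ext i j
    by_cases hij : b i = b j
    · simpa only [hS (toDual_le_toDual.mpr hij.le), hT hij.ge, add_zero] using entry i j
    · rw [hΛ i j hij, hΛ' i j hij]
  subst hΛΛ'
  have hST : S = T := add_left_cancel heq
  have hS0 : S = 0 := by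
    ext i j
    rcases le_total (b i) (b j) with hij | hji
    · exact hS (toDual_le_toDual.mpr hij)
    · exact hST ▸ hT hji
  exact ⟨rfl, hS0, hST ▸ hS0⟩

end IsBlockDiagonalWrt

section Uniqueness

variable {R ι β : Type*} [Ring R] [Fintype ι] [DecidableEq ι] [LinearOrder β] {b : ι → β}

theorem IsBlockUnipotent.eq_one_and_eq_of_mul_eq_mul {M Q Λ Λ' : Matrix ι ι R}
    (hM : IsBlockUnipotent (toDual ∘ b) M) (hQ : IsBlockUnipotent b Q)
    (hΛ : IsBlockDiagonalWrt b Λ) (hΛ' : IsBlockDiagonalWrt b Λ') (hreg : IsRegular Λ)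
    (heq : M * Λ = Λ' * Q) : M = 1 ∧ Λ = Λ' ∧ Q = 1 := by
  have hS : IsStrictBlockTriangular (toDual ∘ b) ((M - 1) * Λ) :=
    (isBlockUnipotent_iff_sub_one.mp hM).mul_blockTriangular hΛ.comp_toDual.blockTriangular
  have hT : IsStrictBlockTriangular b (Λ' * (Q - 1)) :=
    (isBlockUnipotent_iff_sub_one.mp hQ).blockTriangular_mul hΛ'.blockTriangular
  have hsum : Λ + (M - 1) * Λ = Λ' + Λ' * (Q - 1) := by
    rw [sub_mul, mul_sub, one_mul, mul_one, add_sub_cancel, add_sub_cancel, heq]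
  obtain ⟨rfl, hM0, hQ0⟩ := hΛ.eq_and_eq_zero_of_add_eq_add hΛ' hS hT hsum
  exact ⟨sub_eq_zero.mp (hreg.right.mul_right_eq_zero_iff.mp hM0), rfl,
    sub_eq_zero.mp (hreg.left.mul_left_eq_zero_iff.mp hQ0)⟩

theorem block_unipotent_factorization_unique_general {L L' U U' Λ Λ' : Matrix ι ι R}
    (hL : IsBlockUnipotent (toDual ∘ b) L) (hL' : IsBlockUnipotent (toDual ∘ b) L')
    (hU : IsBlockUnipotent b U) (hU' : IsBlockUnipotent b U')
    (hΛ : IsBlockDiagonalWrt b Λ) (hΛ' : IsBlockDiagonalWrt b Λ') (hreg : IsRegular Λ)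
    (heq : L * Λ * U = L' * Λ' * U') : L = L' ∧ Λ = Λ' ∧ U = U' := by
  obtain ⟨V, hV, hLV, hVL⟩ := hL'.exists_inverse
  obtain ⟨W, hW, hUW, hWU⟩ := hU.exists_inverse
  have hVW : V * L * Λ = Λ' * (U' * W) :=
    calc V * L * Λ = V * (L * Λ * U) * W := by simp only [mul_assoc, hUW, mul_one]
      _ = (V * L') * (Λ' * (U' * W)) := by simp only [heq, mul_assoc]
      _ = Λ' * (U' * W) := by rw [hVL, one_mul]
  obtain ⟨hVL1, hΛΛ', hUW1⟩ :=
    (hV.mul hL).eq_one_and_eq_of_mul_eq_mul (hU'.mul hW) hΛ hΛ' hreg hVW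
  exact ⟨(left_inv_eq_right_inv hLV hVL1).symm, hΛΛ', (left_inv_eq_right_inv hUW1 hWU).symm⟩

end Uniqueness

/-- Uniqueness of the solution of Lusztig's matrix equation `ᵗP Λ P = Ω`
(equations (1.16.3)/(1.16.4)): if `P, P'` are block-unipotent and `Λ, Λ'` are invertible
block-diagonal matrices with `ᵗP Λ P = ᵗP' Λ' P'`, then `P = P'` and `Λ = Λ'`. -/
theorem block_unipotent_factorization_unique {K ι β : Type*} [Field K] [Fintype ι]
    [DecidableEq ι] [LinearOrder β] (b : ι → β) (P P' Λ Λ' : Matrix ι ι K)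
    (hP : IsBlockUnipotent b P) (hP' : IsBlockUnipotent b P')
    (hΛ : IsBlockDiagonalWrt b Λ) (hΛ' : IsBlockDiagonalWrt b Λ')
    (hΛu : IsUnit Λ) (hΛ'u : IsUnit Λ')
    (heq : P.transpose * Λ * P = P'.transpose * Λ' * P') :
    P = P' ∧ Λ = Λ' :=
  (block_unipotent_factorization_unique_general hP.transpose hP'.transpose hP hP' hΛ hΛ'
    hΛu.isRegular heq).2.symm
end

section
/- Let G be a finite group, N a normal subgroup of G, and t ∈ G an element whose image generates the quotient group G/N. Let x and y be elements of the coset N·t. If for every representation ρ of G on a finite-dimensional complex vector space one has trace ρ(x) = trace ρ(y), then there exists n ∈ N with n·x·n⁻¹ = y. -/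
/-!
If `x` and `y` have equal traces on all subrepresentations of a representation `ρ`, then `ρ x ∘ f`
and `ρ y ∘ f` have equal traces for every triangularizable `f` commuting with the action, because
the generalized eigenspaces of `f` are subrepresentations. In the regular representation take for
`f` the right multiplication by `x⁻¹`: then `ρ y ∘ f` permutes the basis `G` by `h ↦ y * h * x⁻¹`,
so its trace counts the `h` with `h * x * h⁻¹ = y`. For `y = x` this is the order of the centralizer
of `x`, which is nonzero in `k`; hence the count for `y` is nonzero as well, and `x`, `y` are
conjugate in `G`. When the class of `x` generates `G ⧸ N`, a conjugating element can be corrected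
by a power of `x` so as to lie in `N`.
-/

open MonoidAlgebra Representation

theorem trace_eq_card_fixedPoints_of_apply_basis {ι R M : Type*} [Finite ι] [CommSemiring R]
    [AddCommMonoid M] [Module R M] (b : Module.Basis ι R M) (f : Module.End R M) (σ : ι → ι)
    (hf : ∀ i, f (b i) = b (σ i)) :
    LinearMap.trace R M f = Nat.card (Function.fixedPoints σ) := by
  classical
  have := Fintype.ofFinite ι
  simp [LinearMap.trace_eq_matrix_trace R b, Matrix.trace, LinearMap.toMatrix_apply, hf,
    Finsupp.single_apply, Fintype.card_subtype, Function.IsFixedPt, Function.fixedPoints]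

theorem trace_comp_eq_of_forall_character_eq {k G V : Type*} [Field k] [Monoid G] [AddCommGroup V]
    [Module k V] [FiniteDimensional k V] (ρ : Representation k G V) {x y : G}
    (hchar : ∀ σ : Subrepresentation ρ,
      σ.toRepresentation.character x = σ.toRepresentation.character y)
    {f : Module.End k V} (hcomm : ∀ g, Commute f (ρ g)) (hf : ⨆ μ, f.maxGenEigenspace μ = ⊤) :
    LinearMap.trace k V (ρ x ∘ₗ f) = LinearMap.trace k V (ρ y ∘ₗ f) := by
  let E (μ : k) : Subrepresentation ρ :=
    ⟨f.maxGenEigenspace μ, fun g ↦ f.mapsTo_maxGenEigenspace_of_comm (hcomm g) μ⟩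
  rw [← sub_eq_zero, ← map_sub, ← LinearMap.sub_comp]
  refine LinearMap.trace_comp_eq_zero_of_commute_of_trace_restrict_eq_zero
    ((hcomm x).sub_right (hcomm y)) hf fun μ ↦ ?_
  calc LinearMap.trace k _ ((ρ x - ρ y).restrict _)
      = (E μ).toRepresentation.character x - (E μ).toRepresentation.character y :=
        map_sub (LinearMap.trace k _) ((E μ).toRepresentation x) ((E μ).toRepresentation y)
    _ = 0 := sub_eq_zero.mpr (hchar (E μ))

theorem commute_mulRight_leftRegular {k G : Type*} [CommSemiring k] [Monoid G]
    (a : MonoidAlgebra k G) (g : G) :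
    Commute (LinearMap.mulRight k a) (leftRegular k G g) := by
  have hleft : leftRegular k G g = LinearMap.mulLeft k (single g 1) := by
    ext h : 2
    simp [single_mul_single]
  rw [hleft]
  exact (LinearMap.commute_mulLeft_right (single g 1) a).symm

theorem trace_leftRegular_comp_mulRight_single_inv (k : Type*) {G : Type*} [CommSemiring k]
    [Group G] [Finite G] (x y : G) :
    LinearMap.trace k (MonoidAlgebra k G)
        (leftRegular k G y ∘ₗ LinearMap.mulRight k (single x⁻¹ 1)) =
      Nat.card {h : G // SemiconjBy h x y} := by
  rw [trace_eq_card_fixedPoints_of_apply_basis (MonoidAlgebra.basis G k) _ (fun h ↦ y * h * x⁻¹)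
    fun h ↦ by simp [single_mul_single, mul_assoc]]
  congr! 4 with h
  rw [Function.mem_fixedPoints_iff, mul_inv_eq_iff_eq_mul]
  exact eq_comm

theorem card_semiconjBy_self_dvd_card {G : Type*} [Group G] (x : G) :
    Nat.card {h : G // SemiconjBy h x x} ∣ Nat.card G := by
  have hcentralizer (h : G) : SemiconjBy h x x ↔ h ∈ Subgroup.centralizer {x} :=
    Subgroup.mem_centralizer_singleton_iff.symm
  simpa only [hcentralizer] using Subgroup.card_subgroup_dvd_card (Subgroup.centralizer {x})

theorem isConj_of_forall_character_eq {k G : Type*} [Field k] [IsAlgClosed k] [Group G] [Finite G]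
    [NeZero (Nat.card G : k)] {x y : G}
    (hchar : ∀ σ : Subrepresentation (leftRegular k G),
      σ.toRepresentation.character x = σ.toRepresentation.character y) :
    IsConj x y := by
  have hcard :
      (Nat.card {h : G // SemiconjBy h x x} : k) = Nat.card {h : G // SemiconjBy h x y} := by
    simpa only [trace_leftRegular_comp_mulRight_single_inv] using
      trace_comp_eq_of_forall_character_eq (leftRegular k G) hchar
        (commute_mulRight_leftRegular (single x⁻¹ 1))
        (Module.End.iSup_maxGenEigenspace_eq_top _)
  have hcard_ne : (Nat.card {h : G // SemiconjBy h x y} : k) ≠ 0 :=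
    hcard ▸ ne_zero_of_dvd_ne_zero (NeZero.ne (Nat.card G : k))
      (Nat.cast_dvd_cast (card_semiconjBy_self_dvd_card x))
  obtain ⟨h, hh⟩ : Nonempty {h : G // SemiconjBy h x y} :=
    not_isEmpty_iff.mp fun _ ↦ hcard_ne (by rw [Nat.card_of_isEmpty, Nat.cast_zero])
  exact isConj_iff.mpr ⟨h, mul_inv_eq_iff_eq_mul.mpr hh⟩

theorem exists_mem_conj_eq_of_isConj {G : Type*} [Group G] {N : Subgroup G} [N.Normal] {x y : G}
    (hx : ∀ q : G ⧸ N, q ∈ Subgroup.zpowers (x : G ⧸ N)) (hxy : IsConj x y) :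
    ∃ n ∈ N, n * x * n⁻¹ = y := by
  obtain ⟨g, rfl⟩ := isConj_iff.mp hxy
  obtain ⟨m, hm⟩ := Subgroup.mem_zpowers_iff.mp (hx g)
  refine ⟨g * (x ^ m)⁻¹, ?_, by group⟩
  rw [← QuotientGroup.eq_one_iff, QuotientGroup.mk_mul, QuotientGroup.mk_inv,
    QuotientGroup.mk_zpow, hm, mul_inv_cancel]

theorem conj_in_coset_of_trace_eq_general {k G : Type*} [Field k] [IsAlgClosed k] [Group G]
    [Finite G] [NeZero (Nat.card G : k)] (N : Subgroup G) [N.Normal] (t : G)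
    (hgen : ∀ g : G ⧸ N, g ∈ Subgroup.zpowers (QuotientGroup.mk t : G ⧸ N))
    (x y : G) (hx : x * t⁻¹ ∈ N)
    (hchar : ∀ σ : Subrepresentation (leftRegular k G),
      σ.toRepresentation.character x = σ.toRepresentation.character y) :
    ∃ n ∈ N, n * x * n⁻¹ = y := by
  have hxt : (x : G ⧸ N) = t := QuotientGroup.eq_iff_div_mem.mpr (div_eq_mul_inv x t ▸ hx)
  exact exists_mem_conj_eq_of_isConj (hxt ▸ hgen) (isConj_of_forall_character_eq hchar)

/-- Orthogonality of twisted class functions (used in Lemma 1.9): if `N` is a normal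
subgroup of a finite group `G` with cyclic quotient generated by the image of `t`, and
`x, y ∈ N·t` have equal traces in every finite-dimensional complex representation of `G`,
then `x` and `y` are conjugate by an element of `N`. -/
theorem conj_in_coset_of_trace_eq {G : Type} [Group G] [Fintype G] (N : Subgroup G)
    [N.Normal] (t : G)
    (hgen : ∀ g : G ⧸ N, g ∈ Subgroup.zpowers (QuotientGroup.mk t : G ⧸ N))
    (x y : G) (hx : x * t⁻¹ ∈ N) (hy : y * t⁻¹ ∈ N)
    (htr : ∀ (V : Type) [AddCommGroup V] [Module ℂ V] [FiniteDimensional ℂ V]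
      (ρ : Representation ℂ G V),
      LinearMap.trace ℂ V (ρ x) = LinearMap.trace ℂ V (ρ y)) :
    ∃ n ∈ N, n * x * n⁻¹ = y :=
  conj_in_coset_of_trace_eq_general (k := ℂ) N t hgen x y hx fun σ ↦ htr _ σ.toRepresentation
end
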